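/- The type B Jones–Wenzl projections satisfy the single-term recurrence Q^{(n+1)} = (Q^{(n)}/[n+1]_s) · ( Σ_{i=0}^{n+1} [i]_s · g_{n+1,i} ), where Q^{(n)} is viewed in TL^B_{n+1} via the natural inclusion. -/

import Mathlib

noncomputable section
open scoped Classical

/-! ### The field `ℂ(q,s)` and two-variable quantum integers -/

/-- The field `ℂ(q,s)` of rational functions in two variables. -/
abbrev 𝕃 : Type := FractionRing (MvPolynomial (Fin 2) ℂ)

/-- The variable `q`. -/
def qB : 𝕃 := algebraMap (MvPolynomial (Fin 2) ℂ) 𝕃 (MvPolynomial.X 0)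

/-- The variable `s`. -/
def sB : 𝕃 := algebraMap (MvPolynomial (Fin 2) ℂ) 𝕃 (MvPolynomial.X 1)

/-- The two-variable quantum integer `[n]_s`: `[0]_s = 1` and
`[n]_s = q^(n-1) s + q^(-(n-1)) s⁻¹` for `n ≥ 1`. -/
def bqInt (n : ℤ) : 𝕃 := if n = 0 then 1 else qB ^ (n - 1) * sB + qB ^ (1 - n) * sB⁻¹

/-! ### The Temperley–Lieb algebra of type B and its Jones–Wenzl projections -/

/-- Defining relations of the Temperley–Lieb algebra `TL^B_n` of type B.
The generator indexed by `i : Fin n` represents `e_i` (labels `0, …, n-1`):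
the type A relations among `e_1, …, e_{n-1}`, together with `e_0² = -[1]_s e_0`,
`e_1 e_0 e_1 = (q s⁻¹ + q⁻¹ s) e_1`, and `e_0 e_i = e_i e_0` for `i ≥ 2`. -/
inductive TLBrel (n : ℕ) : FreeAlgebra 𝕃 (Fin n) → FreeAlgebra 𝕃 (Fin n) → Prop
  | sqA (i : Fin n) (h : 1 ≤ (i : ℕ)) :
      TLBrel n (FreeAlgebra.ι 𝕃 i * FreeAlgebra.ι 𝕃 i) ((-(qB + qB⁻¹)) • FreeAlgebra.ι 𝕃 i)
  | sq0 (i : Fin n) (h : (i : ℕ) = 0) :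
      TLBrel n (FreeAlgebra.ι 𝕃 i * FreeAlgebra.ι 𝕃 i) ((-(bqInt 1)) • FreeAlgebra.ι 𝕃 i)
  | braidA (i j : Fin n) (hi : 1 ≤ (i : ℕ)) (hj : 1 ≤ (j : ℕ))
      (h : (j : ℕ) = i + 1 ∨ (i : ℕ) = j + 1) :
      TLBrel n (FreeAlgebra.ι 𝕃 i * FreeAlgebra.ι 𝕃 j * FreeAlgebra.ι 𝕃 i) (FreeAlgebra.ι 𝕃 i)
  | braid0 (i j : Fin n) (hi : (i : ℕ) = 1) (hj : (j : ℕ) = 0) :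
      TLBrel n (FreeAlgebra.ι 𝕃 i * FreeAlgebra.ι 𝕃 j * FreeAlgebra.ι 𝕃 i)
        ((qB * sB⁻¹ + qB⁻¹ * sB) • FreeAlgebra.ι 𝕃 i)
  | comm (i j : Fin n) (h : (i : ℕ) + 1 < j ∨ (j : ℕ) + 1 < i) :
      TLBrel n (FreeAlgebra.ι 𝕃 i * FreeAlgebra.ι 𝕃 j) (FreeAlgebra.ι 𝕃 j * FreeAlgebra.ι 𝕃 i)

/-- The Temperley–Lieb algebra `TL^B_n` of type B, with generators `e_0, …, e_{n-1}`. -/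
abbrev TLB (n : ℕ) : Type := RingQuot (TLBrel n)

/-- The generator `e_i` of `TL^B_n` (0-based labels). -/
def EB {n : ℕ} (i : Fin n) : TLB n := RingQuot.mkAlgHom 𝕃 (TLBrel n) (FreeAlgebra.ι 𝕃 i)

set_option synthInstance.maxHeartbeats 1000000 in
/-- The natural inclusion `TL^B_n → TL^B_{n+1}`, sending `e_i` to `e_i`. -/
def TLBincl (n : ℕ) : TLB n →ₐ[𝕃] TLB (n + 1) :=
  RingQuot.liftAlgHom 𝕃
    ⟨FreeAlgebra.lift 𝕃 (fun i => EB i.castSucc), by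
      intro x y h
      induction h with
      | sqA i h =>
          have h2 := RingQuot.mkAlgHom_rel 𝕃 (TLBrel.sqA i.castSucc (by simpa using h))
          simp only [map_mul, map_smul, FreeAlgebra.lift_ι_apply, EB] at h2 ⊢
          exact h2
      | sq0 i h =>
          have h2 := RingQuot.mkAlgHom_rel 𝕃 (TLBrel.sq0 i.castSucc (by simpa using h))
          simp only [map_mul, map_smul, FreeAlgebra.lift_ι_apply, EB] at h2 ⊢
          exact h2
      | braidA i j hi hj h =>
          have h2 := RingQuot.mkAlgHom_rel 𝕃
            (TLBrel.braidA i.castSucc j.castSucc (by simpa using hi) (by simpa using hj)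
              (by simpa using h))
          simp only [map_mul, FreeAlgebra.lift_ι_apply, EB] at h2 ⊢
          exact h2
      | braid0 i j hi hj =>
          have h2 := RingQuot.mkAlgHom_rel 𝕃
            (TLBrel.braid0 i.castSucc j.castSucc (by simpa using hi) (by simpa using hj))
          simp only [map_mul, map_smul, FreeAlgebra.lift_ι_apply, EB] at h2 ⊢
          exact h2
      | comm i j h =>
          have h2 := RingQuot.mkAlgHom_rel 𝕃
            (TLBrel.comm i.castSucc j.castSucc (by simpa using h))
          simp only [map_mul, FreeAlgebra.lift_ι_apply, EB] at h2 ⊢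
          exact h2⟩

/-- The iterated natural inclusion `TL^B_n → TL^B_{n+k}`. -/
def TLBinclIter (n : ℕ) : (k : ℕ) → TLB n →ₐ[𝕃] TLB (n + k)
  | 0 => AlgHom.id 𝕃 (TLB n)
  | k + 1 => (TLBincl (n + k)).comp (TLBinclIter n k)

/-- The type B Jones–Wenzl projection `Q^{(n)} ∈ TL^B_n`, via the recurrence
`Q^{(0)} = 1`, `Q^{(n+1)} = Q^{(n)} + ([n]_s/[n+1]_s) Q^{(n)} e_n Q^{(n)}`. -/
def JWB : (n : ℕ) → TLB n
  | 0 => 1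
  | n + 1 =>
      TLBincl n (JWB n) +
        (bqInt n / bqInt (n + 1)) •
          (TLBincl n (JWB n) * EB (Fin.last n) * TLBincl n (JWB n))

/-! ### Type B diagrams, their algebra elements, and coefficients -/

/-- The generator `e_t` (0-based label) of `TL^B_m`, or `1` if out of range. -/
def eB (m t : ℕ) : TLB m := if h : t < m then EB ⟨t, h⟩ else 1

/-- The element `g_{n,j} = e_{n-1} e_{n-2} ⋯ e_j` of `TL^B_m` (0-based labels),
equal to the identity when `j = n`; `g_{n,0}` is `g_{n,1}` with a dot on its bottom cap. -/
def gB (m n j : ℕ) : TLB m := ((List.range' j (n - j)).reverse.map (eB m)).prod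

/-! ### Abstract setting: a sequence of elements satisfying the type B relations -/

/-- The recursively defined Jones–Wenzl elements attached to any sequence `e`. -/
def absQ {K A : Type*} [Field K] [Ring A] [Algebra K A] (b : ℕ → K) (e : ℕ → A) : ℕ → A
  | 0 => 1
  | n + 1 => absQ b e n + (b n / b (n + 1)) • (absQ b e n * e n * absQ b e n)

/-- The type B relations for the first `N` members of a sequence. -/
structure AbsRels {K A : Type*} [Field K] [Ring A] [Algebra K A]
    (b : ℕ → K) (d t : K) (e : ℕ → A) (N : ℕ) : Prop where
  sq : ∀ i, 1 ≤ i → i < N → e i * e i = (-d) • e i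
  sq0 : 0 < N → e 0 * e 0 = (-(b 1)) • e 0
  br : ∀ i, 1 ≤ i → i + 1 < N → e (i + 1) * e i * e (i + 1) = e (i + 1)
  br0 : 1 < N → e 1 * e 0 * e 1 = t • e 1
  comm : ∀ i j, i + 1 < j → j < N → e i * e j = e j * e i
  b0 : b 0 = 1
  bne : ∀ n, b n ≠ 0
  brec : ∀ n, d * b (n + 2) = b (n + 1) + b (n + 3)
  brec0 : d * b 1 = t + b 2

section
variable {K A : Type*} [Field K] [Ring A] [Algebra K A]
  {b : ℕ → K} {d t : K} {e : ℕ → A} {N : ℕ}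

theorem absQ_comm (h : AbsRels b d t e N) (n j : ℕ) (hn : n < j) (hj : j < N) :
    absQ b e n * e j = e j * absQ b e n := by
  induction n with
  | zero => simp [absQ]
  | succ n ih =>
    have h1 : Commute (absQ b e n) (e j) := ih (by omega)
    have h2 : Commute (e n) (e j) := h.comm n j (by omega) hj
    exact Commute.add_left h1 (Commute.smul_left ((h1.mul_left h2).mul_left h1) _)

theorem absQ_key (h : AbsRels b d t e N) (n : ℕ) (hn : n + 1 < N)
    (hid : absQ b e n * absQ b e n = absQ b e n) :
    e (n + 1) * absQ b e (n + 1) * e (n + 1)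
      = (-(b (n + 2) / b (n + 1))) • (absQ b e n * e (n + 1)) := by
  have hc := absQ_comm h n (n + 1) (by omega) hn
  have hsq := h.sq (n + 1) (by omega) hn
  have hb := h.bne (n + 1)
  obtain ⟨u, hu, hcoef⟩ : ∃ u : K, e (n + 1) * e n * e (n + 1) = u • e (n + 1) ∧
      -d + b n / b (n + 1) * u = -(b (n + 2) / b (n + 1)) := by
    rcases n with _ | m
    · refine ⟨t, h.br0 hn, ?_⟩
      have := h.brec0
      rw [h.b0]
      field_simp
      linear_combination -this
    · refine ⟨1, by rw [one_smul]; exact h.br (m + 1) (by omega) hn, ?_⟩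
      have := h.brec m
      field_simp
      linear_combination -this
  rw [absQ]
  generalize absQ b e n = P at *
  generalize e (n + 1) = x at *
  generalize e n = y at *
  have e1 : x * P * x = (-d) • (P * x) := by
    rw [← hc, mul_assoc, hsq, mul_smul_comm]
  have e2 : x * (P * y * P) * x = u • (P * x) := by
    calc x * (P * y * P) * x = (x * P) * y * (P * x) := by noncomm_ring
      _ = (P * x) * y * (x * P) := by rw [hc]
      _ = P * (x * y * x) * P := by noncomm_ring
      _ = u • (P * x * P) := by rw [hu]; simp
      _ = u • (P * x) := by rw [mul_assoc, ← hc, ← mul_assoc, hid]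
  rw [mul_add, add_mul, e1, mul_smul_comm, smul_mul_assoc, e2, smul_smul, ← add_smul, hcoef]

theorem absQ_absorb (n : ℕ) (hid : absQ b e n * absQ b e n = absQ b e n) :
    absQ b e (n + 1) * absQ b e n = absQ b e (n + 1) := by
  rw [absQ, add_mul, hid, smul_mul_assoc, mul_assoc _ _ (absQ b e n), hid]

theorem absQ_step {P x : A} {c : K} (hid : P * P = P) (hc : c ≠ 0)
    (hx : P * x * P * x * P = (-c⁻¹) • (P * x * P)) :
    (P + c • (P * x * P)) * (P + c • (P * x * P)) = P + c • (P * x * P) := by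
  have e1 : P * (P * x * P) = P * x * P := by rw [← mul_assoc, ← mul_assoc, hid]
  have e2 : (P * x * P) * P = P * x * P := by rw [mul_assoc, hid]
  have e3 : (P * x * P) * (P * x * P) = (-c⁻¹) • (P * x * P) := by
    rw [← hx, ← mul_assoc, ← mul_assoc, e2]
  rw [mul_add, add_mul, add_mul, hid, smul_mul_assoc, mul_smul_comm, smul_mul_assoc,
    mul_smul_comm, e1, e2, e3, smul_smul, smul_smul]
  have : c * c * -c⁻¹ = -c := by field_simp
  rw [this, neg_smul]
  abel

theorem absQ_idem (h : AbsRels b d t e N) (n : ℕ) (hn : n ≤ N) :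
    absQ b e n * absQ b e n = absQ b e n := by
  induction n using Nat.strong_induction_on with
  | _ n ih =>
  rcases n with _ | _ | n
  · simp [absQ]
  · have h0 := ih 0 (by omega) (by omega)
    rw [absQ]
    refine absQ_step h0 (div_ne_zero (h.bne _) (h.bne _)) ?_
    simp [absQ, h.sq0 (by omega), h.b0]
  · have h0 := ih n (by omega) (by omega)
    have h1 := ih (n + 1) (by omega) (by omega)
    have hk := absQ_key h n (by omega) h0
    have ha := absQ_absorb n h0
    rw [absQ]
    refine absQ_step h1 (div_ne_zero (h.bne _) (h.bne _)) ?_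
    generalize absQ b e (n + 1) = R at *
    calc R * e (n + 1) * R * e (n + 1) * R = R * (e (n + 1) * R * e (n + 1)) * R := by
          noncomm_ring
      _ = (-(b (n + 2) / b (n + 1))) • ((R * absQ b e n) * e (n + 1) * R) := by
          rw [hk]; simp [mul_assoc]
      _ = _ := by rw [ha, inv_div]

theorem absQ_main (h : AbsRels b d t e N) (g : ℕ → ℕ → A) (hg1 : ∀ n, n ≤ N → g n n = 1)
    (hgs : ∀ n i, n < N → i ≤ n → g (n + 1) i = e n * g n i) (n : ℕ) (hn : n < N) :
    absQ b e (n + 1) = (b (n + 1))⁻¹ •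
      (absQ b e n * ∑ i ∈ Finset.range (n + 2), b i • g (n + 1) i) := by
  have hb := h.bne (n + 1)
  have hsum : ∀ n, n < N → ∑ i ∈ Finset.range (n + 1), b i • g (n + 1) i
      = e n * ∑ i ∈ Finset.range (n + 1), b i • g n i := by
    intro n hn
    rw [Finset.mul_sum]
    refine Finset.sum_congr rfl fun i hi => ?_
    rw [hgs n i hn (by simpa [Nat.lt_succ_iff] using hi), mul_smul_comm]
  have main : b n • (absQ b e n * e n * absQ b e n)
      = absQ b e n * ∑ i ∈ Finset.range (n + 1), b i • g (n + 1) i := by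
    rw [hsum n hn]
    induction n with
    | zero => simp [absQ, h.b0, hg1]
    | succ n ih =>
      have ih := ih (by omega) (h.bne _)
      have hbn := h.bne (n + 1)
      have hid := absQ_idem h n (by omega)
      have hQ : b (n + 1) • absQ b e (n + 1)
          = absQ b e n * ∑ i ∈ Finset.range (n + 2), b i • g (n + 1) i := by
        rw [Finset.sum_range_succ, hsum n (by omega), mul_add, ← ih, hg1 _ (by omega), absQ,
          smul_add, smul_smul, mul_div_cancel₀ _ hbn, mul_smul_comm, mul_one, add_comm]
      rw [← mul_smul_comm, hQ, ← mul_assoc, mul_assoc (absQ b e (n + 1)),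
        ← absQ_comm h n (n + 1) (by omega) (by omega), ← mul_assoc, absQ_absorb n hid, mul_assoc]
  rw [Finset.sum_range_succ, mul_add, ← main, hg1 _ (by omega), absQ, smul_add, smul_smul,
    mul_smul_comm, smul_smul, inv_mul_cancel₀ hb, one_smul, mul_one, add_comm, div_eq_inv_mul]

end

/-! ### The concrete algebra -/

theorem qB_ne : qB ≠ 0 := by
  unfold qB
  rw [Ne, FaithfulSMul.algebraMap_eq_zero_iff]
  exact MvPolynomial.X_ne_zero 0

theorem sB_ne : sB ≠ 0 := by
  unfold sB
  rw [Ne, FaithfulSMul.algebraMap_eq_zero_iff]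
  exact MvPolynomial.X_ne_zero 1

theorem bqInt_succ (k : ℕ) :
    bqInt ((k + 1 : ℕ) : ℤ) = qB ^ k * sB + (qB ^ k)⁻¹ * sB⁻¹ := by
  unfold bqInt
  rw [if_neg (by omega), show ((k + 1 : ℕ) : ℤ) - 1 = (k : ℤ) by push_cast; ring,
    show 1 - ((k + 1 : ℕ) : ℤ) = -(k : ℤ) by push_cast; ring, zpow_neg, zpow_natCast]

theorem bqInt_ne (n : ℕ) : bqInt (n : ℤ) ≠ 0 := by
  rcases n with _ | k
  · simp [bqInt]
  · rw [bqInt_succ]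
    intro h
    have hq := qB_ne
    have hs := sB_ne
    have h1 : qB ^ (2 * k) * sB ^ 2 + 1 = 0 := by
      have h2 : (qB ^ k * sB + (qB ^ k)⁻¹ * sB⁻¹) * (qB ^ k * sB) = 0 := by rw [h, zero_mul]
      field_simp at h2
      rw [← h2]; ring
    have h3 : algebraMap (MvPolynomial (Fin 2) ℂ) 𝕃
        (MvPolynomial.X 0 ^ (2 * k) * MvPolynomial.X 1 ^ 2 + 1) = 0 := by
      simpa [qB, sB] using h1
    rw [FaithfulSMul.algebraMap_eq_zero_iff] at h3
    have h4 := congrArg (MvPolynomial.eval (fun _ => (0 : ℂ))) h3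
    simp at h4

theorem eB_of_lt {m i : ℕ} (h : i < m) : eB m i = EB ⟨i, h⟩ := dif_pos h

theorem TLB_rels (m : ℕ) :
    AbsRels (fun n : ℕ => bqInt (n : ℤ)) (qB + qB⁻¹) (qB * sB⁻¹ + qB⁻¹ * sB) (eB m) m where
  sq i h1 h2 := by
    have h := RingQuot.mkAlgHom_rel 𝕃 (TLBrel.sqA (⟨i, h2⟩ : Fin m) h1)
    simp only [map_mul, map_smul] at h
    rw [eB_of_lt h2]; exact h
  sq0 h2 := by
    have h := RingQuot.mkAlgHom_rel 𝕃 (TLBrel.sq0 (⟨0, h2⟩ : Fin m) rfl)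
    simp only [map_mul, map_smul] at h
    rw [eB_of_lt h2]; exact h
  br i h1 h2 := by
    have h := RingQuot.mkAlgHom_rel 𝕃 (TLBrel.braidA (⟨i + 1, h2⟩ : Fin m)
      ⟨i, by omega⟩ (by simp) h1 (Or.inr rfl))
    simp only [map_mul] at h
    rw [eB_of_lt h2, eB_of_lt (show i < m by omega)]; exact h
  br0 h2 := by
    have h := RingQuot.mkAlgHom_rel 𝕃 (TLBrel.braid0 (⟨1, h2⟩ : Fin m) ⟨0, by omega⟩ rfl rfl)
    simp only [map_mul, map_smul] at h
    rw [eB_of_lt h2, eB_of_lt (show 0 < m by omega)]; exact h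
  comm i j h1 h2 := by
    have h := RingQuot.mkAlgHom_rel 𝕃 (TLBrel.comm (⟨i, by omega⟩ : Fin m) ⟨j, h2⟩ (Or.inl h1))
    simp only [map_mul] at h
    rw [eB_of_lt h2, eB_of_lt (show i < m by omega)]; exact h
  b0 := by simp [bqInt]
  bne n := bqInt_ne n
  brec n := by
    have hq := qB_ne
    have hs := sB_ne
    simp only [bqInt_succ n, bqInt_succ (n + 1), bqInt_succ (n + 2)]
    field_simp
    ring
  brec0 := by
    have hq := qB_ne
    have hs := sB_ne
    simp only [bqInt_succ 0, bqInt_succ 1]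
    field_simp
    ring

theorem TLBincl_EB (n : ℕ) (i : Fin n) : TLBincl n (EB i) = EB i.castSucc := by
  simp [TLBincl, EB]

theorem map_JWB (n : ℕ) : ∀ {A : Type} [Ring A] [Algebra 𝕃 A] (e : ℕ → A) (φ : TLB n →ₐ[𝕃] A)
    (_ : ∀ i : Fin n, φ (EB i) = e i),
    φ (JWB n) = absQ (fun n : ℕ => bqInt (n : ℤ)) e n := by
  induction n with
  | zero => intro A _ _ e φ h; simp [JWB, absQ]
  | succ n ih =>
    intro A _ _ e φ h
    have h1 : φ (TLBincl n (JWB n)) = absQ (fun n : ℕ => bqInt (n : ℤ)) e n := by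
      refine ih e (φ.comp (TLBincl n)) fun i => ?_
      rw [AlgHom.comp_apply, TLBincl_EB, h]; simp
    have h2 : φ (EB (Fin.last n)) = e n := by rw [h]; simp
    rw [JWB, map_add, map_smul, map_mul, map_mul, h1, h2, absQ]
    push_cast
    rfl

/-- The type B Jones–Wenzl projections satisfy the single-term
recurrence `Q^{(n+1)} = (Q^{(n)}/[n+1]_s) · (Σ_{i=0}^{n+1} [i]_s g_{n+1,i})`, where
`Q^{(n)}` is viewed in `TL^B_{n+1}` via the natural inclusion and
`g_{n+1,i} = e_n e_{n-1} ⋯ e_i`. -/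
theorem JWB_single_term_recurrence (n : ℕ) :
    JWB (n + 1) =
      (bqInt (n + 1))⁻¹ •
        (TLBincl n (JWB n) * ∑ i ∈ Finset.range (n + 2), bqInt i • gB (n + 1) (n + 1) i) := by
  have hL : JWB (n + 1) = absQ (fun n : ℕ => bqInt (n : ℤ)) (eB (n + 1)) (n + 1) :=
    map_JWB (n + 1) (eB (n + 1)) (AlgHom.id 𝕃 _) fun i => by
      rw [eB_of_lt i.2]; rfl
  have hR : TLBincl n (JWB n) = absQ (fun n : ℕ => bqInt (n : ℤ)) (eB (n + 1)) n :=
    map_JWB n (eB (n + 1)) (TLBincl n) fun i => by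
      rw [TLBincl_EB, eB_of_lt (show (i : ℕ) < n + 1 by omega)]; rfl
  have hm := absQ_main (TLB_rels (n + 1)) (gB (n + 1)) (fun k _ => by simp [gB])
    (fun k i _ hi => by
      unfold gB
      rw [show k + 1 - i = (k - i) + 1 by omega, List.range'_concat]
      simp [show i + (k - i) = k by omega]) n (by omega)
  rw [hL, hR, hm]
  push_cast
  rfl
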